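/- arXiv:2509.21581 — 4 statements merged into one kernel-verified Lean document; each statement's English description precedes it below -/
import Mathlib

section
/- Let β be a real number, let β' be a nonzero real number, and let f ∈ 𝓢(ℝ², ℂ). Then for every ρ'' ∈ ℝ², H_{β'}[K_β[f]](ρ'') = e^{2β'}·K_{β−β'}[f](ρ''), where the outer transformation H_{β'} is applied to the function ρ' ↦ K_β[f](ρ'). That is, H_{β'} ∘ K_β = e^{2β'}·K_{β−β'}. -/
open MeasureTheory Filter
open scoped RealInnerProductSpace

noncomputable section

/-- The Euclidean plane `ℝ²`. -/
abbrev Plane := EuclideanSpace ℝ (Fin 2)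

/-- Hyperbolic fractional-order Fourier transformation of the first kind of order `β`
(for `β ≠ 0`), with `coth β = cosh β / sinh β`. -/
def fracH (β : ℝ) (f : Plane → ℂ) (ρ' : Plane) : ℂ :=
  Complex.I * Real.exp β / Real.sinh β *
    Complex.exp (-(Complex.I * Real.pi * ‖ρ'‖ ^ 2 * (Real.cosh β / Real.sinh β))) *
    ∫ ρ : Plane,
      Complex.exp (-(Complex.I * Real.pi * ‖ρ‖ ^ 2 * (Real.cosh β / Real.sinh β))) *
      Complex.exp (2 * Real.pi * Complex.I * ⟪ρ', ρ⟫ / Real.sinh β) * f ρ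

/-- Hyperbolic fractional-order Fourier transformation of the second kind of order `β`. -/
def fracK (β : ℝ) (f : Plane → ℂ) (ρ' : Plane) : ℂ :=
  Complex.I * Real.exp β / Real.cosh β *
    Complex.exp (Complex.I * Real.pi * ‖ρ'‖ ^ 2 * Real.tanh β) *
    ∫ ρ : Plane,
      Complex.exp (-(Complex.I * Real.pi * ‖ρ‖ ^ 2 * Real.tanh β)) *
      Complex.exp (2 * Real.pi * Complex.I * ⟪ρ', ρ⟫ / Real.cosh β) * f ρ


/-!
Both transformations multiply `f` by a chirp `exp (iπq‖x‖²)`, take the inverse Fourier transform,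
dilate by some `k`, and multiply by a second chirp and a constant. Such maps are closed under
composition: between the two Fourier transforms stands a single chirp, of rate
`tanh β - coth β' ≠ 0` here; self-adjointness moves the outer Fourier transform onto it, and the
transform of a chirp is again a chirp. A chirp is not integrable, so this step is carried out for
the Gaussians `exp (-πb‖x‖²)` with `0 < re b` and extended by continuity to the boundary points
`b ≠ 0` with `re b = 0`. The rates of the composite then follow from the hyperbolic addition
formulas.
-/

open Complex (I)
open scoped Real FourierTransform

section QuadraticPhase

variable {V : Type*} [NormedAddCommGroup V]

/-- The chirp `x ↦ exp (iπa‖x‖²)` of rate `a`. -/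
def chirp (a : ℝ) (x : V) : ℂ :=
  Complex.exp (I * π * ‖x‖ ^ 2 * a)

theorem chirp_mul_chirp (a b : ℝ) (x : V) : chirp a x * chirp b x = chirp (a + b) x := by
  rw [chirp, chirp, chirp, ← Complex.exp_add, ← mul_add, Complex.ofReal_add]

theorem norm_chirp (a : ℝ) (x : V) : ‖chirp a x‖ = 1 := by
  rw [chirp, ← Complex.norm_exp_ofReal_mul_I (π * ‖x‖ ^ 2 * a)]
  push_cast
  ring_nf

theorem continuous_chirp (a : ℝ) : Continuous (chirp a : V → ℂ) := by
  unfold chirp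
  fun_prop

theorem integrable_chirp_mul_iff [MeasurableSpace V] [OpensMeasurableSpace V]
    [SecondCountableTopology V] {μ : Measure V} (a : ℝ) {f : V → ℂ} :
    Integrable (fun x => chirp a x * f x) μ ↔ Integrable f μ := by
  have mul_left (b : ℝ) {g : V → ℂ} (hg : Integrable g μ) :
      Integrable (fun x => chirp b x * g x) μ :=
    hg.bdd_mul (continuous_chirp b).aestronglyMeasurable (ae_of_all _ fun x => (norm_chirp b x).le)
  refine ⟨fun h => (mul_left (-a) h).congr (ae_of_all _ fun x => ?_), mul_left a⟩
  simp only [← mul_assoc, chirp_mul_chirp, neg_add_cancel]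
  simp [chirp]

variable [InnerProductSpace ℝ V]

theorem chirp_smul_add_smul (a k l : ℝ) (x y : V) :
    chirp a (k • x + l • y) =
      chirp (a * k ^ 2) x * 𝐞 (a * k * l * ⟪x, y⟫) * chirp (a * l ^ 2) y := by
  have hnorm : ‖k • x + l • y‖ ^ 2 =
      k ^ 2 * ‖x‖ ^ 2 + 2 * (k * l * ⟪x, y⟫) + l ^ 2 * ‖y‖ ^ 2 := by
    rw [norm_add_sq_real, norm_smul, norm_smul, mul_pow, mul_pow, Real.norm_eq_abs,
      Real.norm_eq_abs, sq_abs, sq_abs, real_inner_smul_left, real_inner_smul_right, mul_assoc]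
  rw [chirp, chirp, chirp, Real.fourierChar_apply, ← Complex.exp_add, ← Complex.exp_add,
    ← Complex.ofReal_pow, hnorm]
  congr 1
  push_cast
  ring

theorem hasTemperateGrowth_cexp_ofReal_mul_I :
    Function.HasTemperateGrowth (fun t : ℝ => Complex.exp (t * I)) := by
  have hderiv (t : ℝ) : HasDerivAt (fun t : ℝ => Complex.exp (t * I))
      (Complex.exp (t * I) * I) t := by
    simpa using ((Complex.ofRealCLM.hasDerivAt (x := t)).mul_const I).cexp
  have hiter (n : ℕ) : iteratedDeriv n (fun t : ℝ => Complex.exp (t * I)) =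
      fun t : ℝ => Complex.exp (t * I) * I ^ n := by
    induction n with
    | zero => simp
    | succ n ih =>
      funext t
      rw [iteratedDeriv_succ, ih, ((hderiv t).mul_const _).deriv, pow_succ', mul_assoc]
  refine ⟨(Complex.ofRealCLM.contDiff.mul contDiff_const).cexp, fun n => ⟨0, 1, fun t => ?_⟩⟩
  rw [norm_iteratedFDeriv_eq_norm_iteratedDeriv, hiter]
  simp [Complex.norm_exp_ofReal_mul_I]

theorem hasTemperateGrowth_chirp (a : ℝ) :
    Function.HasTemperateGrowth (chirp a : V → ℂ) := by
  have hphase : Function.HasTemperateGrowth (fun x : V => π * a * ‖x‖ ^ 2) := by fun_prop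
  convert hasTemperateGrowth_cexp_ofReal_mul_I.comp hphase using 1
  funext x
  rw [chirp, Function.comp_apply]
  congr 1
  push_cast
  ring

theorem continuousOn_integral_cexp_neg_mul {α : Type*} [MeasurableSpace α] {μ : Measure α}
    {φ : α → ℝ} (hφ : AEMeasurable φ μ) (hφ_nonneg : 0 ≤ φ) {g : α → ℂ} (hg : Integrable g μ) :
    ContinuousOn (fun z : ℂ => ∫ x, Complex.exp (-(z * φ x)) * g x ∂μ) {z | 0 ≤ z.re} := by
  refine continuousOn_of_dominated (bound := fun x => ‖g x‖) (fun z _ => ?_)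
    (fun z hz => ae_of_all _ fun x => ?_) hg.norm (ae_of_all _ fun x => by fun_prop)
  · have hexp : AEMeasurable (fun x => Complex.exp (-(z * φ x))) μ := by fun_prop
    exact hexp.aestronglyMeasurable.mul hg.aestronglyMeasurable
  · rw [norm_mul, Complex.norm_exp, Complex.neg_re, Complex.re_mul_ofReal]
    exact mul_le_of_le_one_left (norm_nonneg _)
      (Real.exp_le_one_iff.2 (neg_nonpos.2 (mul_nonneg hz (hφ_nonneg x))))

theorem mem_slitPlane_of_re_nonneg {z : ℂ} (hz : 0 ≤ z.re) (hz₀ : z ≠ 0) :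
    z ∈ Complex.slitPlane :=
  Complex.mem_slitPlane_iff.2 <|
    hz.lt_or_eq.imp_right fun hre him => hz₀ (Complex.ext hre.symm him)

variable [FiniteDimensional ℝ V] [MeasurableSpace V] [BorelSpace V]

theorem integral_fourierInv_smul_mul (k : ℝ) {f g : V → ℂ} (hf : Integrable f)
    (hg : Integrable g) :
    ∫ x, 𝓕⁻ f (k • x) * g x = ∫ x, f x * 𝓕⁻ g (k • x) := by
  have hL : Continuous fun p : V × V => (-(k • innerₗ V)) p.1 p.2 := by
    simp only [LinearMap.neg_apply, LinearMap.smul_apply, innerₗ_apply_apply]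
    fun_prop
  have h := VectorFourier.integral_fourierIntegral_smul_eq_flip (L := -(k • innerₗ V))
    Real.continuous_fourierChar hL hf hg
  simpa [Real.fourierInv_eq, VectorFourier.fourierIntegral, real_inner_smul_right,
      real_inner_comm] using h

theorem fourierInv_gaussian_mul_fourierInv_smul_of_re_pos {b : ℂ} (hb : 0 < b.re) (k : ℝ)
    (w : V) {g : V → ℂ} (hg : Integrable g) :
    𝓕⁻ (fun x => Complex.exp (-(b * (π * ‖x‖ ^ 2 : ℝ))) * 𝓕⁻ g (k • x)) w =
      b⁻¹ ^ (Module.finrank ℝ V / 2 : ℂ) *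
        ∫ y, Complex.exp (-(b⁻¹ * (π * ‖w + k • y‖ ^ 2 : ℝ))) * g y := by
  have hπ : (π : ℂ) ≠ 0 := Complex.ofReal_ne_zero.2 Real.pi_ne_zero
  have hπb : 0 < (π * b).re := by
    simpa only [Complex.re_ofReal_mul] using mul_pos Real.pi_pos hb
  let G : V → ℂ := fun x => Complex.exp (-(π * b) * ‖x‖ ^ 2 + 2 * π * I * ⟪w, x⟫)
  have hG : Integrable G := GaussianFourier.integrable_cexp_neg_mul_sq_norm_add hπb _ w
  have hG_fourierInv (y : V) : 𝓕⁻ G (k • y) =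
      b⁻¹ ^ (Module.finrank ℝ V / 2 : ℂ) *
        Complex.exp (-(b⁻¹ * (π * ‖w + k • y‖ ^ 2 : ℝ))) := by
    rw [Real.fourierInv_eq_fourier_neg, fourier_gaussian_innerProductSpace' hπb, sub_neg_eq_add,
      div_mul_cancel_left₀ hπ]
    congr 2
    push_cast
    field_simp
  calc
    _ = ∫ x, 𝓕⁻ g (k • x) * G x := by
      rw [Real.fourierInv_eq']
      refine integral_congr_ae (ae_of_all _ fun x => ?_)
      simp only [smul_eq_mul, G, Complex.exp_add, real_inner_comm w x]
      push_cast
      ring_nf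
    _ = ∫ y, g y * 𝓕⁻ G (k • y) := integral_fourierInv_smul_mul k hg hG
    _ = _ := by
      rw [← integral_const_mul]
      simp only [hG_fourierInv, mul_comm, mul_left_comm]

theorem fourierInv_gaussian_mul_fourierInv_smul {b : ℂ} (hb : 0 ≤ b.re) (hb₀ : b ≠ 0) (k : ℝ)
    (w : V) {g : V → ℂ} (hg : Integrable g) (hg' : Integrable fun x => 𝓕⁻ g (k • x)) :
    𝓕⁻ (fun x => Complex.exp (-(b * (π * ‖x‖ ^ 2 : ℝ))) * 𝓕⁻ g (k • x)) w =
      b⁻¹ ^ (Module.finrank ℝ V / 2 : ℂ) *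
        ∫ y, Complex.exp (-(b⁻¹ * (π * ‖w + k • y‖ ^ 2 : ℝ))) * g y := by
  let t : Set ℂ := {b | 0 ≤ b.re ∧ b ≠ 0}
  have hleft : ContinuousOn
      (fun b : ℂ => 𝓕⁻ (fun x => Complex.exp (-(b * (π * ‖x‖ ^ 2 : ℝ))) * 𝓕⁻ g (k • x)) w) t := by
    have hchar : Integrable fun x => 𝐞 ⟪x, w⟫ • 𝓕⁻ g (k • x) := by
      simpa using (Real.fourierIntegral_convergent_iff (-w)).2 hg'
    have hcont := continuousOn_integral_cexp_neg_mul (φ := fun x : V => π * ‖x‖ ^ 2)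
      (by fun_prop) (fun x => by positivity) hchar
    simp only [Real.fourierInv_eq, mul_smul_comm] at hcont ⊢
    exact hcont.mono fun b hb => hb.1
  have hright : ContinuousOn (fun b : ℂ => b⁻¹ ^ (Module.finrank ℝ V / 2 : ℂ) *
      ∫ y, Complex.exp (-(b⁻¹ * (π * ‖w + k • y‖ ^ 2 : ℝ))) * g y) t := by
    have hinv : ContinuousOn (fun b : ℂ => b⁻¹) t := continuousOn_inv₀.mono fun b hb => hb.2
    have hcont := continuousOn_integral_cexp_neg_mul (φ := fun y : V => π * ‖w + k • y‖ ^ 2)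
      (by fun_prop) (fun y => by positivity) hg
    have hinv_re (b : ℂ) (hb : b ∈ t) : 0 ≤ b⁻¹.re := by
      simpa only [Complex.inv_re] using div_nonneg hb.1 (Complex.normSq_nonneg b)
    refine (hinv.cpow_const fun b hb => ?_).mul (hcont.comp hinv hinv_re)
    exact mem_slitPlane_of_re_nonneg (hinv_re b hb) (inv_ne_zero hb.2)
  exact Set.EqOn.of_subset_closure (s := {b : ℂ | 0 < b.re})
    (fun b hb => fourierInv_gaussian_mul_fourierInv_smul_of_re_pos hb k w hg) hleft hright
    (fun b hb => ⟨hb.le, fun h => by simp [h] at hb⟩)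
    (fun b hb => by simpa using hb.1) ⟨hb, hb₀⟩

theorem fourierInv_chirp_mul_fourierInv_smul {a : ℝ} (ha : a ≠ 0) (k : ℝ) (w : V) {g : V → ℂ}
    (hg : Integrable g) (hg' : Integrable fun x => 𝓕⁻ g (k • x)) :
    𝓕⁻ (fun x => chirp a x * 𝓕⁻ g (k • x)) w =
      (I / a) ^ (Module.finrank ℝ V / 2 : ℂ) * ∫ y, chirp (-a⁻¹) (w + k • y) * g y := by
  have hb : 0 ≤ (-(I * a)).re := by simp
  have hb₀ : -(I * a) ≠ 0 := by simpa using ha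
  have hinv : (-(I * a))⁻¹ = I / a := by
    rw [inv_neg, mul_inv, Complex.inv_I, neg_mul, neg_neg, div_eq_mul_inv]
  have hchirp (c : ℝ) (x : V) : chirp c x = Complex.exp (I * c * (π * ‖x‖ ^ 2 : ℝ)) := by
    rw [chirp]
    push_cast
    ring_nf
  have h := fourierInv_gaussian_mul_fourierInv_smul hb hb₀ k w hg hg'
  simp only [hinv, neg_mul, neg_neg] at h
  simpa only [hchirp, Complex.ofReal_neg, Complex.ofReal_inv, mul_neg, neg_mul,
    ← div_eq_mul_inv] using h

/-- The quadratic phase transform with parameters `p`, `k`, `q`: multiply by the chirp of rate `q`,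
apply the inverse Fourier transform, dilate by `k`, and multiply by the chirp of rate `p`. -/
def quadraticPhaseTransform (p k q : ℝ) (f : V → ℂ) (x : V) : ℂ :=
  chirp p x * 𝓕⁻ (fun y => chirp q y * f y) (k • x)

theorem quadraticPhaseTransform_eq_integral (p k q : ℝ) (f : V → ℂ) (x : V) :
    quadraticPhaseTransform p k q f x =
      chirp p x * ∫ y, 𝐞 (k * ⟪x, y⟫) * (chirp q y * f y) := by
  simp only [quadraticPhaseTransform, Real.fourierInv_eq, Circle.smul_def, smul_eq_mul,
    real_inner_smul_right, real_inner_comm]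

theorem quadraticPhaseTransform_const_mul (p k q : ℝ) (c : ℂ) (f : V → ℂ) (x : V) :
    quadraticPhaseTransform p k q (fun y => c * f y) x =
      c * quadraticPhaseTransform p k q f x := by
  simp only [quadraticPhaseTransform_eq_integral, mul_left_comm _ c, integral_const_mul]

theorem integrable_quadraticPhaseTransform (p : ℝ) {k : ℝ} (hk : k ≠ 0) (q : ℝ)
    (f : SchwartzMap V ℂ) : Integrable (quadraticPhaseTransform p k q f) := by
  refine (integrable_chirp_mul_iff p).2 ?_
  have h := ((𝓕⁻ (SchwartzMap.smulLeftCLM ℂ (chirp q) f)).integrable (μ := volume)).comp_smul hk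
  rw [SchwartzMap.fourierInv_coe] at h
  convert h using 4 with x
  rw [SchwartzMap.smulLeftCLM_apply_apply (hasTemperateGrowth_chirp q), smul_eq_mul]

theorem quadraticPhaseTransform_quadraticPhaseTransform {p q' : ℝ} (h : q' + p ≠ 0)
    (p' k' k q : ℝ) {f : V → ℂ} (hf : Integrable f)
    (hf' : Integrable (quadraticPhaseTransform p k q f)) (x : V) :
    quadraticPhaseTransform p' k' q' (quadraticPhaseTransform p k q f) x =
      (I / (q' + p : ℝ)) ^ (Module.finrank ℝ V / 2 : ℂ) *
        quadraticPhaseTransform (p' - k' ^ 2 / (q' + p)) (-(k' * k / (q' + p)))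
          (q - k ^ 2 / (q' + p)) f x := by
  have hg : Integrable fun y => chirp q y * f y := (integrable_chirp_mul_iff q).2 hf
  have hg' : Integrable fun y => 𝓕⁻ (fun y => chirp q y * f y) (k • y) :=
    (integrable_chirp_mul_iff p).1 hf'
  calc
    _ = chirp p' x * 𝓕⁻ (fun y => chirp (q' + p) y * 𝓕⁻ (fun y => chirp q y * f y) (k • y))
        (k' • x) := by
      simp only [quadraticPhaseTransform, ← mul_assoc, chirp_mul_chirp]
    _ = chirp p' x * ((I / (q' + p : ℝ)) ^ (Module.finrank ℝ V / 2 : ℂ) *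
        ∫ y, chirp (-(q' + p)⁻¹) (k' • x + k • y) * (chirp q y * f y)) := by
      rw [fourierInv_chirp_mul_fourierInv_smul h k (k' • x) hg hg']
    _ = _ := by
      rw [quadraticPhaseTransform_eq_integral, sub_eq_add_neg p', sub_eq_add_neg q,
        ← chirp_mul_chirp]
      simp only [chirp_smul_add_smul, ← chirp_mul_chirp, ← integral_const_mul]
      congr 1
      funext y
      ring_nf

end QuadraticPhase

section Hyperbolic

theorem fracK_eq_quadraticPhaseTransform (β : ℝ) (f : Plane → ℂ) (x : Plane) :
    fracK β f x = I * Real.exp β / Real.cosh β *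
      quadraticPhaseTransform (Real.tanh β) (Real.cosh β)⁻¹ (-Real.tanh β) f x := by
  simp only [fracK, quadraticPhaseTransform_eq_integral, chirp, Real.fourierChar_apply]
  rw [mul_assoc]
  congr 3
  funext y
  push_cast
  ring_nf

theorem fracH_eq_quadraticPhaseTransform (β : ℝ) (f : Plane → ℂ) (x : Plane) :
    fracH β f x = I * Real.exp β / Real.sinh β *
      quadraticPhaseTransform (-(Real.cosh β / Real.sinh β)) (Real.sinh β)⁻¹
        (-(Real.cosh β / Real.sinh β)) f x := by
  simp only [fracH, quadraticPhaseTransform_eq_integral, chirp, Real.fourierChar_apply]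
  rw [mul_assoc]
  congr 2
  · push_cast
    ring_nf
  · congr 1
    funext y
    push_cast
    ring_nf

theorem integrable_fracK_iff {β : ℝ} {f : Plane → ℂ} :
    Integrable (fracK β f) ↔
      Integrable (quadraticPhaseTransform (Real.tanh β) (Real.cosh β)⁻¹ (-Real.tanh β) f) := by
  have hc : (Real.cosh β : ℂ) ≠ 0 := Complex.ofReal_ne_zero.2 (Real.cosh_pos β).ne'
  have he : (Real.exp β : ℂ) ≠ 0 := Complex.ofReal_ne_zero.2 (Real.exp_pos β).ne'
  rw [funext (fracK_eq_quadraticPhaseTransform β f)]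
  exact integrable_const_mul_iff (div_ne_zero (mul_ne_zero Complex.I_ne_zero he) hc).isUnit _

theorem integrable_fracK (β : ℝ) (f : SchwartzMap Plane ℂ) : Integrable (fracK β f) :=
  integrable_fracK_iff.2
    (integrable_quadraticPhaseTransform _ (inv_ne_zero (Real.cosh_pos β).ne') _ f)

theorem tanh_sub_coth (x : ℝ) {y : ℝ} (hy : y ≠ 0) :
    Real.tanh x - Real.cosh y / Real.sinh y =
      -(Real.cosh (x - y) / (Real.sinh y * Real.cosh x)) := by
  have hs : Real.sinh y ≠ 0 := Real.sinh_ne_zero.2 hy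
  have hc : Real.cosh x ≠ 0 := (Real.cosh_pos x).ne'
  rw [Real.tanh_eq_sinh_div_cosh, Real.cosh_sub]
  field_simp
  ring

theorem neg_coth_sub_inv_sq_div_tanh_sub_coth (x : ℝ) {y : ℝ} (hy : y ≠ 0) :
    -(Real.cosh y / Real.sinh y) - (Real.sinh y)⁻¹ ^ 2 / (Real.tanh x - Real.cosh y / Real.sinh y) =
      Real.tanh (x - y) := by
  have hs : Real.sinh y ≠ 0 := Real.sinh_ne_zero.2 hy
  have hd : Real.cosh (x - y) ≠ 0 := (Real.cosh_pos _).ne'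
  have h := Real.cosh_add y (x - y)
  rw [add_sub_cancel] at h
  rw [tanh_sub_coth x hy, Real.tanh_eq_sinh_div_cosh]
  field_simp
  linear_combination h

theorem neg_tanh_sub_inv_sq_div_tanh_sub_coth (x : ℝ) {y : ℝ} (hy : y ≠ 0) :
    -Real.tanh x - (Real.cosh x)⁻¹ ^ 2 / (Real.tanh x - Real.cosh y / Real.sinh y) =
      -Real.tanh (x - y) := by
  have hc : Real.cosh x ≠ 0 := (Real.cosh_pos x).ne'
  have hd : Real.cosh (x - y) ≠ 0 := (Real.cosh_pos _).ne'
  have h := Real.sinh_sub x (x - y)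
  rw [sub_sub_cancel] at h
  rw [tanh_sub_coth x hy, Real.tanh_eq_sinh_div_cosh, Real.tanh_eq_sinh_div_cosh]
  field_simp
  linear_combination h

theorem neg_inv_mul_inv_div_tanh_sub_coth (x : ℝ) {y : ℝ} (hy : y ≠ 0) :
    -((Real.sinh y)⁻¹ * (Real.cosh x)⁻¹ / (Real.tanh x - Real.cosh y / Real.sinh y)) =
      (Real.cosh (x - y))⁻¹ := by
  have hs : Real.sinh y ≠ 0 := Real.sinh_ne_zero.2 hy
  have hc : Real.cosh x ≠ 0 := (Real.cosh_pos x).ne'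
  rw [tanh_sub_coth x hy]
  field_simp

theorem fracH_prefactor_mul_fracK_prefactor (x : ℝ) {y : ℝ} (hy : y ≠ 0) :
    I * Real.exp y / Real.sinh y * (I * Real.exp x / Real.cosh x) *
        (I / (Real.tanh x - Real.cosh y / Real.sinh y : ℝ)) =
      Real.exp (2 * y) * (I * Real.exp (x - y) / Real.cosh (x - y)) := by
  have hs : (Real.sinh y : ℂ) ≠ 0 := Complex.ofReal_ne_zero.2 (Real.sinh_ne_zero.2 hy)
  have hc : (Real.cosh x : ℂ) ≠ 0 := Complex.ofReal_ne_zero.2 (Real.cosh_pos x).ne'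
  have hd : (Real.cosh (x - y) : ℂ) ≠ 0 := Complex.ofReal_ne_zero.2 (Real.cosh_pos _).ne'
  have hexp : (Real.exp (2 * y) * Real.exp (x - y) : ℂ) = Real.exp y * Real.exp x := by
    norm_cast
    rw [← Real.exp_add, ← Real.exp_add, two_mul, add_assoc, add_sub_cancel]
  calc
    _ = Real.exp y * Real.exp x * (I / Real.cosh (x - y)) := by
      rw [tanh_sub_coth x hy, Complex.ofReal_neg, Complex.ofReal_div, Complex.ofReal_mul]
      field_simp
      rw [Complex.I_sq, neg_neg]
    _ = _ := by
      rw [← hexp]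
      ring

theorem stmt11_general (β : ℝ) {β' : ℝ} (hβ' : β' ≠ 0) {f : Plane → ℂ} (hf : Integrable f)
    (hKf : Integrable (fracK β f)) (ρ'' : Plane) :
    fracH β' (fracK β f) ρ'' = Real.exp (2 * β') * fracK (β - β') f ρ'' := by
  have hrate : -(Real.cosh β' / Real.sinh β') + Real.tanh β ≠ 0 := by
    rw [neg_add_eq_sub, tanh_sub_coth β hβ']
    exact neg_ne_zero.2 (div_ne_zero (Real.cosh_pos _).ne'
      (mul_ne_zero (Real.sinh_ne_zero.2 hβ') (Real.cosh_pos β).ne'))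
  have hcomp := quadraticPhaseTransform_quadraticPhaseTransform hrate
    (-(Real.cosh β' / Real.sinh β')) (Real.sinh β')⁻¹ (Real.cosh β)⁻¹ (-Real.tanh β) hf
    (integrable_fracK_iff.1 hKf) ρ''
  rw [neg_add_eq_sub, neg_coth_sub_inv_sq_div_tanh_sub_coth β hβ',
    neg_tanh_sub_inv_sq_div_tanh_sub_coth β hβ', neg_inv_mul_inv_div_tanh_sub_coth β hβ',
    finrank_euclideanSpace_fin, Nat.cast_ofNat, div_self two_ne_zero, Complex.cpow_one] at hcomp
  calc
    _ = I * Real.exp β' / Real.sinh β' * (I * Real.exp β / Real.cosh β) *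
          (I / (Real.tanh β - Real.cosh β' / Real.sinh β' : ℝ)) *
        quadraticPhaseTransform (Real.tanh (β - β')) (Real.cosh (β - β'))⁻¹
          (-Real.tanh (β - β')) f ρ'' := by
      rw [fracH_eq_quadraticPhaseTransform, funext (fracK_eq_quadraticPhaseTransform β f),
        quadraticPhaseTransform_const_mul, hcomp, ← mul_assoc, ← mul_assoc]
    _ = _ := by
      rw [fracH_prefactor_mul_fracK_prefactor β hβ', mul_assoc, ← fracK_eq_quadraticPhaseTransform]

end Hyperbolic

/-- `H_{β'} ∘ K_β = e^(2β')·K_{β−β'}` on Schwartz functions. -/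
theorem stmt11 (β β' : ℝ) (hβ' : β' ≠ 0)
    (f : SchwartzMap Plane ℂ) (ρ'' : Plane) :
    fracH β' (fun ρ' => fracK β (⇑f) ρ') ρ'' =
      Real.exp (2 * β') * fracK (β - β') (⇑f) ρ'' :=
  stmt11_general β hβ' f.integrable (integrable_fracK β f) ρ''

end
end

section
/- Let D, R_A, R_B be real numbers with D ≠ 0 and D·(D − R_A + R_B) ≠ 0, and suppose that J = (R_A − D)(R_B + D)/(D·(D − R_A + R_B)) satisfies J < −1. Then R_A·(R_A − D) and R_B·(R_B + D) are nonzero and have the same sign; equivalently, R_A·(R_A − D)·R_B·(R_B + D) > 0. -/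
section Field

variable {K : Type*} [Field K]

/-- The diffraction parameter `J` of two surfaces with radii of curvature `RA` and `RB` at
distance `D`. It is meaningful only if `D * (D - RA + RB) ≠ 0`; otherwise its value is `0`. -/
def diffractionParameter (D RA RB : K) : K :=
  (RA - D) * (RB + D) / (D * (D - RA + RB))

variable {D RA RB : K}

theorem diffractionParameter_add_one (hden : D * (D - RA + RB) ≠ 0) :
    diffractionParameter D RA RB + 1 = RA * RB / (D * (D - RA + RB)) := by
  have numerator_add_denominator :
      (RA - D) * (RB + D) + D * (D - RA + RB) = RA * RB := by ring
  rw [diffractionParameter, div_add_one hden, numerator_add_denominator]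

theorem diffractionParameter_mul_add_one (hden : D * (D - RA + RB) ≠ 0) :
    diffractionParameter D RA RB * (diffractionParameter D RA RB + 1) =
      RA * (RA - D) * (RB * (RB + D)) / (D * (D - RA + RB)) ^ 2 := by
  rw [diffractionParameter_add_one hden, diffractionParameter, div_mul_div_comm, ← sq]
  ring

end Field

theorem mul_add_one_pos_iff {R : Type*} [Ring R] [LinearOrder R] [IsStrictOrderedRing R] {x : R} :
    0 < x * (x + 1) ↔ x < -1 ∨ 0 < x := by
  rw [mul_pos_iff]
  grind

theorem stmt12_general {K : Type*} [Field K] [LinearOrder K] [IsStrictOrderedRing K]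
    {D RA RB : K} (hden : D * (D - RA + RB) ≠ 0) :
    0 < RA * (RA - D) * (RB * (RB + D)) ↔
      diffractionParameter D RA RB < -1 ∨ 0 < diffractionParameter D RA RB := by
  rw [← mul_add_one_pos_iff, diffractionParameter_mul_add_one hden,
    div_pos_iff_of_pos_right (sq_pos_of_ne_zero hden)]

/-- If the diffraction parameter `J = (R_A − D)(R_B + D)/(D(D − R_A + R_B))` satisfies
`J < −1`, then `R_A(R_A − D)` and `R_B(R_B + D)` are nonzero and have the same sign. -/
theorem stmt12 (D RA RB : ℝ) (hD : D ≠ 0) (hden : D * (D - RA + RB) ≠ 0)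
    (hJ : (RA - D) * (RB + D) / (D * (D - RA + RB)) < -1) :
    RA * (RA - D) * (RB * (RB + D)) > 0 :=
  (stmt12_general hden).2 (.inl hJ)
end

section
/- Let λ > 0 and let D, R_A, R_B be nonzero real numbers with D ≠ R_A, D ≠ −R_B, D·(D − R_A + R_B) ≠ 0, and suppose J = (R_A − D)(R_B + D)/(D·(D − R_A + R_B)) < −1. Let s ∈ {1, −1} satisfy s·R_A·(R_A − D) > 0, and let β be a nonzero real number with coth²β = −J and β·D > 0. Set ε_A = s·(D/(R_A − D))·coth β and ε_B = s·(D/(R_B + D))·coth β. Let U_A ∈ 𝓢(ℝ², ℂ), let U_B : ℝ² → ℂ be given by the diffraction formula, and define the reduced field amplitudes u_A(ρ) = √(λ·ε_A·R_A)·U_A(√(λ·ε_A·R_A)·ρ) and u_B(ρ') = √(λ·ε_B·R_B)·U_B(√(λ·ε_B·R_B)·ρ'). Then for every ρ' ∈ ℝ², u_B(ρ') = s·e^{−sβ}·H_{sβ}[u_A](s·ρ'); in particular u_B(ρ') = e^{−β}·H_β[u_A](ρ') if s = 1, and u_B(ρ') = −e^{β}·H_{−β}[u_A](−ρ') if s =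 −1. -/
open MeasureTheory Filter
open scoped RealInnerProductSpace

noncomputable section

/-- Scalar diffraction formula: the field transfer from a spherical emitter of radius `RA`
to a spherical receiver of radius `RB` at distance `D`, with wavelength `lam`. -/
def diffract (lam D RA RB : ℝ) (UA : Plane → ℂ) (r' : Plane) : ℂ :=
  Complex.I / (lam * D) *
    Complex.exp (-(Complex.I * Real.pi / lam * ((1 / RB + 1 / D) * ‖r'‖ ^ 2))) *
    ∫ r : Plane,
      Complex.exp (-(Complex.I * Real.pi / lam * ((1 / D - 1 / RA) * ‖r‖ ^ 2))) *
      Complex.exp (2 * Real.pi * Complex.I * ⟪r, r'⟫ / (lam * D)) * UA r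

/-!
The diffraction integral and the fractional transform are both Fourier integrals between two
chirps. Dilating the source by `p` and the image by `q` multiplies the chirp rates by `p²` and
`q²` and the frequency by `p q`, so it suffices to match three numbers. The coefficients `ε_A` and
`ε_B` are chosen so that both rates become `s coth β`. The frequency becomes `1 / sinh β` because
`coth² β = -J` amounts to `R_A R_B cosh² β = (R_A - D) (R_B + D)`; this relation also transfers the
sign of `s R_A (R_A - D)` to `s R_B (R_B + D)`, so that the receiver scale is positive as well.
-/

section ChirpFourier

variable {E : Type*} [NormedAddCommGroup E] [InnerProductSpace ℝ E] [FiniteDimensional ℝ E]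
  [MeasurableSpace E] [BorelSpace E]

/-- The unnormalized quadratic-phase (linear canonical) transform: a Fourier integral of
frequency `c` between a chirp of rate `b` at the source and a chirp of rate `a` at the image.
It is the common form of `diffract` and `fracH`. -/
def chirpFourier (a b c : ℝ) (f : E → ℂ) (x : E) : ℂ :=
  Complex.exp (-(Complex.I * Real.pi * (a * ‖x‖ ^ 2 : ℝ))) *
    ∫ y, Complex.exp (-(Complex.I * Real.pi * (b * ‖y‖ ^ 2 : ℝ))) *
      Complex.exp (2 * Real.pi * Complex.I * (c * ⟪x, y⟫ : ℝ)) * f y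

theorem chirpFourier_neg (a b c : ℝ) (f : E → ℂ) (x : E) :
    chirpFourier a b c f (-x) = chirpFourier a b (-c) f x := by
  simp only [chirpFourier, norm_neg, inner_neg_left, mul_neg, neg_mul]

theorem chirpFourier_const_mul (a b c : ℝ) (z : ℂ) (f : E → ℂ) (x : E) :
    chirpFourier a b c (fun y ↦ z * f y) x = z * chirpFourier a b c f x := by
  simp only [chirpFourier, mul_left_comm _ z, integral_const_mul]

theorem chirpFourier_smul (a b c : ℝ) {p : ℝ} (hp : 0 < p) (q : ℝ) (f : E → ℂ) (x : E) :
    chirpFourier a b c f (q • x) =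
      p ^ Module.finrank ℝ E *
        chirpFourier (a * q ^ 2) (b * p ^ 2) (c * (p * q)) (fun y ↦ f (p • y)) x := by
  have norm_sq (k e : ℝ) (y : E) : e * ‖k • y‖ ^ 2 = e * k ^ 2 * ‖y‖ ^ 2 := by
    rw [norm_smul, mul_pow, Real.norm_eq_abs, sq_abs, mul_assoc]
  have inner_eq (y : E) : c * ⟪q • x, p • y⟫ = c * (p * q) * ⟪x, y⟫ := by
    rw [real_inner_smul_left, real_inner_smul_right]
    ring
  have integral_dilate (g : E → ℂ) :
      ∫ y, g y = (p : ℂ) ^ Module.finrank ℝ E * ∫ y, g (p • y) := by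
    rw [Measure.integral_comp_smul_of_nonneg volume g p (hR := hp.le), ← Complex.ofReal_pow,
      ← Complex.real_smul, smul_inv_smul₀ (pow_pos hp _).ne']
  rw [chirpFourier, integral_dilate]
  simp only [norm_sq, inner_eq]
  exact mul_left_comm _ _ _

end ChirpFourier

theorem diffract_eq_chirpFourier (lam D RA RB : ℝ) (U : Plane → ℂ) (r : Plane) :
    diffract lam D RA RB U r =
      Complex.I * (1 / (lam * D) : ℝ) *
        chirpFourier ((1 / RB + 1 / D) / lam) ((1 / D - 1 / RA) / lam) (1 / (lam * D)) U r := by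
  have chirp_eq (e n : ℂ) : Complex.I * Real.pi / lam * (e * n) =
      Complex.I * Real.pi * (e / lam * n) := by ring
  have wave_eq (n : ℂ) : 2 * Real.pi * Complex.I * n / (lam * D) =
      2 * Real.pi * Complex.I * (1 / (lam * D) * n) := by ring
  rw [diffract, chirpFourier]
  push_cast
  simp only [chirp_eq, wave_eq, real_inner_comm]
  rw [mul_assoc, mul_one_div]

theorem exp_neg_mul_fracH (β : ℝ) (f : Plane → ℂ) (x : Plane) :
    Real.exp (-β) * fracH β f x =
      Complex.I * (1 / Real.sinh β : ℝ) *
        chirpFourier (Real.cosh β / Real.sinh β) (Real.cosh β / Real.sinh β)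
          (1 / Real.sinh β) f x := by
  have amplitude_eq : (Real.exp (-β) : ℂ) * (Complex.I * Real.exp β / Real.sinh β) =
      Complex.I * (1 / Real.sinh β : ℝ) := by
    push_cast
    rw [mul_div_assoc', mul_left_comm, ← Complex.exp_add, neg_add_cancel, Complex.exp_zero,
      mul_div_assoc]
  have chirp_eq (n e : ℂ) : Complex.I * Real.pi * n * e = Complex.I * Real.pi * (e * n) := by ring
  have wave_eq (n e : ℂ) : 2 * Real.pi * Complex.I * n / e =
      2 * Real.pi * Complex.I * (1 / e * n) := by ring
  rw [fracH, mul_assoc, ← mul_assoc (Real.exp (-β) : ℂ), amplitude_eq, chirpFourier]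
  push_cast
  simp only [chirp_eq, wave_eq]

theorem sign_mul_exp_neg_mul_fracH {s : ℝ} (hs : s = 1 ∨ s = -1) (β : ℝ) (f : Plane → ℂ)
    (x : Plane) :
    s * Real.exp (-(s * β)) * fracH (s * β) f (s • x) =
      Complex.I * (1 / Real.sinh β : ℝ) *
        chirpFourier (s * (Real.cosh β / Real.sinh β)) (s * (Real.cosh β / Real.sinh β))
          (1 / Real.sinh β) f x := by
  rw [mul_assoc, exp_neg_mul_fracH]
  rcases hs with rfl | rfl
  · simp only [Complex.ofReal_one, one_mul, one_smul]
  · simp only [neg_mul, one_mul, neg_smul, one_smul, chirpFourier_neg, Real.sinh_neg,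
      Real.cosh_neg, div_neg, neg_neg, Complex.ofReal_neg, Complex.ofReal_one, mul_neg]

/-- The reduced field amplitude: `U` in the coordinate `ρ = r / √k`, with the factor `√k` that
preserves the `L²` norm on the plane. -/
def reducedAmplitude (k : ℝ) (U : Plane → ℂ) (ρ : Plane) : ℂ :=
  √k * U (√k • ρ)

theorem reducedAmplitude_chirpFourier (a b c : ℝ) {k l : ℝ} (hk : 0 < k) (hl : 0 ≤ l)
    (U : Plane → ℂ) (ρ : Plane) :
    reducedAmplitude l (chirpFourier a b c U) ρ =
      √(k * l) * chirpFourier (a * l) (b * k) (c * √(k * l)) (reducedAmplitude k U) ρ := by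
  have hred : reducedAmplitude k U = fun y ↦ (√k : ℂ) * U (√k • y) := rfl
  rw [hred, chirpFourier_const_mul, reducedAmplitude,
    chirpFourier_smul a b c (Real.sqrt_pos.mpr hk), finrank_euclideanSpace_fin,
    Real.sq_sqrt hk.le, Real.sq_sqrt hl, Real.sqrt_mul hk.le, Complex.ofReal_mul]
  ring

theorem reducedAmplitude_diffract (lam D RA RB : ℝ) {k l : ℝ} (hk : 0 < k) (hl : 0 ≤ l)
    (U : Plane → ℂ) (ρ : Plane) :
    reducedAmplitude l (diffract lam D RA RB U) ρ =
      Complex.I * (√(k * l) / (lam * D) : ℝ) *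
        chirpFourier ((1 / RB + 1 / D) / lam * l) ((1 / D - 1 / RA) / lam * k)
          (√(k * l) / (lam * D)) (reducedAmplitude k U) ρ := by
  have dilate_eq := reducedAmplitude_chirpFourier ((1 / RB + 1 / D) / lam)
    ((1 / D - 1 / RA) / lam) (1 / (lam * D)) hk hl U ρ
  rw [one_div_mul_eq_div] at dilate_eq
  rw [reducedAmplitude] at dilate_eq ⊢
  rw [diffract_eq_chirpFourier, mul_left_comm, dilate_eq]
  push_cast
  ring

section Geometry

/-- The diffraction parameter `J` of an emitter of radius `RA` and a receiver of radius `RB` at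
distance `D`; it is `0` when its denominator vanishes. -/
def diffractionParam (D RA RB : ℝ) : ℝ :=
  (RA - D) * (RB + D) / (D * (D - RA + RB))

/-- The coefficient `ε = s (D / x) coth β` of the reduced coordinates: `ε_A` is its value at
`x = RA - D` and `ε_B` its value at `x = RB + D`. -/
def reducedCoeff (s D β x : ℝ) : ℝ :=
  s * (D / x) * (Real.cosh β / Real.sinh β)

variable {lam s D RA RB β : ℝ}

theorem diffractionParam_ne_zero_iff :
    diffractionParam D RA RB ≠ 0 ↔
      (RA - D ≠ 0 ∧ RB + D ≠ 0) ∧ D ≠ 0 ∧ D - RA + RB ≠ 0 := by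
  simp only [diffractionParam, div_ne_zero_iff, mul_ne_zero_iff]

theorem diffractionParam_ne_zero_of_coth_sq (hβ : β ≠ 0)
    (hcoth : (Real.cosh β / Real.sinh β) ^ 2 = -diffractionParam D RA RB) :
    diffractionParam D RA RB ≠ 0 := by
  have hcoth0 : (Real.cosh β / Real.sinh β) ^ 2 ≠ 0 :=
    pow_ne_zero 2 (div_ne_zero (Real.cosh_pos β).ne' (Real.sinh_ne_zero.mpr hβ))
  rwa [hcoth, neg_ne_zero] at hcoth0

-- This is `J + 1 = J / cosh² β` cleared of the denominator of `J`, because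
-- `(RA - D) (RB + D) + D (D - RA + RB) = RA RB`.
theorem radii_mul_cosh_sq (hβ : β ≠ 0)
    (hcoth : (Real.cosh β / Real.sinh β) ^ 2 = -diffractionParam D RA RB) :
    RA * RB * Real.cosh β ^ 2 = (RA - D) * (RB + D) := by
  obtain ⟨-, hD, hden⟩ :=
    diffractionParam_ne_zero_iff.mp (diffractionParam_ne_zero_of_coth_sq hβ hcoth)
  have hsinh : Real.sinh β ≠ 0 := Real.sinh_ne_zero.mpr hβ
  rw [diffractionParam] at hcoth
  field_simp at hcoth
  rw [Real.sinh_sq] at hcoth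
  linear_combination hcoth

theorem receiver_sign_pos (hA : 0 < s * (RA * (RA - D))) (hB : RB + D ≠ 0)
    (hradii : RA * RB * Real.cosh β ^ 2 = (RA - D) * (RB + D)) :
    0 < s * (RB * (RB + D)) := by
  obtain ⟨hs, -, hAD⟩ : s ≠ 0 ∧ RA ≠ 0 ∧ RA - D ≠ 0 := by
    simpa only [mul_ne_zero_iff] using hA.ne'
  have hRR : RA * RB ≠ 0 := left_ne_zero_of_mul (hradii ▸ mul_ne_zero hAD hB)
  refine pos_of_mul_pos_right ?_ hA.le
  calc 0 < (s * (RA * RB) * Real.cosh β) ^ 2 := by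
        have := (Real.cosh_pos β).ne'
        positivity
    _ = s * (RA * (RA - D)) * (s * (RB * (RB + D))) := by
        linear_combination s ^ 2 * RA * RB * hradii

theorem div_sinh_pos_of_mul_pos (hβD : 0 < β * D) : 0 < D / Real.sinh β := by
  rcases pos_and_pos_or_neg_and_neg_of_mul_pos hβD with ⟨hβ, hD⟩ | ⟨hβ, hD⟩
  · exact div_pos hD (Real.sinh_pos_iff.mpr hβ)
  · exact div_pos_of_neg_of_neg hD (Real.sinh_neg_iff.mpr hβ)

theorem mul_reducedCoeff_mul_pos {R x : ℝ} (hlam : 0 < lam) (hx : 0 < s * (R * x))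
    (hβD : 0 < β * D) :
    0 < lam * reducedCoeff s D β x * R := by
  have hx0 : x ≠ 0 := right_ne_zero_of_mul (right_ne_zero_of_mul hx.ne')
  calc 0 < lam * (s * (R * x)) * Real.cosh β * (D / Real.sinh β) / x ^ 2 := by
        have := div_sinh_pos_of_mul_pos hβD
        positivity
    _ = lam * reducedCoeff s D β x * R := by
        rw [reducedCoeff]
        field_simp

theorem emitter_chirp_mul (hlam : lam ≠ 0) (hD : D ≠ 0) (hRA : RA ≠ 0) (hA : RA - D ≠ 0) :
    (1 / D - 1 / RA) / lam * (lam * reducedCoeff s D β (RA - D) * RA) =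
      s * (Real.cosh β / Real.sinh β) := by
  rw [reducedCoeff]
  field_simp

theorem receiver_chirp_mul (hlam : lam ≠ 0) (hD : D ≠ 0) (hRB : RB ≠ 0) (hB : RB + D ≠ 0) :
    (1 / RB + 1 / D) / lam * (lam * reducedCoeff s D β (RB + D) * RB) =
      s * (Real.cosh β / Real.sinh β) := by
  rw [reducedCoeff]
  field_simp
  ring

theorem emitter_scale_mul_receiver_scale (hs : s ^ 2 = 1) (hA : RA - D ≠ 0) (hB : RB + D ≠ 0)
    (hradii : RA * RB * Real.cosh β ^ 2 = (RA - D) * (RB + D)) :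
    (lam * reducedCoeff s D β (RA - D) * RA) * (lam * reducedCoeff s D β (RB + D) * RB) =
      (lam * (D / Real.sinh β)) ^ 2 := by
  calc _ = s ^ 2 * (lam * (D / Real.sinh β)) ^ 2 *
        (RA * RB * Real.cosh β ^ 2 / ((RA - D) * (RB + D))) := by
        rw [reducedCoeff, reducedCoeff]
        field_simp
    _ = (lam * (D / Real.sinh β)) ^ 2 := by
        rw [hs, hradii, div_self (mul_ne_zero hA hB), one_mul, mul_one]

end Geometry

theorem stmt16_general {lam D RA RB s β : ℝ} (hlam : 0 < lam) (hs : s = 1 ∨ s = -1)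
    (hsgn : 0 < s * (RA * (RA - D)))
    (hcoth : (Real.cosh β / Real.sinh β) ^ 2 = -diffractionParam D RA RB) (hβD : 0 < β * D)
    (UA : Plane → ℂ) (ρ' : Plane) :
    reducedAmplitude (lam * reducedCoeff s D β (RB + D) * RB) (diffract lam D RA RB UA) ρ' =
      s * Real.exp (-(s * β)) *
        fracH (s * β) (reducedAmplitude (lam * reducedCoeff s D β (RA - D) * RA) UA)
          (s • ρ') := by
  have hβ : β ≠ 0 := left_ne_zero_of_mul hβD.ne'
  obtain ⟨⟨hA, hB⟩, hD, -⟩ :=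
    diffractionParam_ne_zero_iff.mp (diffractionParam_ne_zero_of_coth_sq hβ hcoth)
  have hradii := radii_mul_cosh_sq hβ hcoth
  have hsgnB := receiver_sign_pos hsgn hB hradii
  have hRA : RA ≠ 0 := left_ne_zero_of_mul (right_ne_zero_of_mul hsgn.ne')
  have hRB : RB ≠ 0 := left_ne_zero_of_mul (right_ne_zero_of_mul hsgnB.ne')
  have hk := mul_reducedCoeff_mul_pos hlam hsgn hβD
  have hl := mul_reducedCoeff_mul_pos hlam hsgnB hβD
  have frequency_eq : √((lam * reducedCoeff s D β (RA - D) * RA) *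
      (lam * reducedCoeff s D β (RB + D) * RB)) / (lam * D) = 1 / Real.sinh β := by
    rw [emitter_scale_mul_receiver_scale (sq_eq_one_iff.mpr hs) hA hB hradii,
      Real.sqrt_sq (mul_pos hlam (div_sinh_pos_of_mul_pos hβD)).le]
    field_simp
  rw [reducedAmplitude_diffract lam D RA RB hk hl.le, frequency_eq, sign_mul_exp_neg_mul_fracH hs,
    emitter_chirp_mul hlam.ne' hD hRA hA, receiver_chirp_mul hlam.ne' hD hRB hB]

/-- Theorem 1: for `J < −1`, the diffraction field transfer is expressed as a hyperbolic
fractional Fourier transformation of the first kind: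
`u_B(ρ') = s·e^(−sβ)·H_{sβ}[u_A](s·ρ')`. -/
theorem stmt16 (lam D RA RB : ℝ) (hlam : 0 < lam)
    (hD : D ≠ 0) (hRA : RA ≠ 0) (hRB : RB ≠ 0) (hDA : D ≠ RA) (hDB : D ≠ -RB)
    (hden : D * (D - RA + RB) ≠ 0)
    (hJ : (RA - D) * (RB + D) / (D * (D - RA + RB)) < -1)
    (s : ℝ) (hs : s = 1 ∨ s = -1) (hsgn : s * (RA * (RA - D)) > 0)
    (β : ℝ) (hβ : β ≠ 0)
    (hcoth : (Real.cosh β / Real.sinh β) ^ 2 =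
      -((RA - D) * (RB + D) / (D * (D - RA + RB))))
    (hβD : β * D > 0)
    (εA εB : ℝ)
    (hεA : εA = s * (D / (RA - D)) * (Real.cosh β / Real.sinh β))
    (hεB : εB = s * (D / (RB + D)) * (Real.cosh β / Real.sinh β))
    (UA : SchwartzMap Plane ℂ) (UB uA uB : Plane → ℂ)
    (hUB : ∀ r', UB r' = diffract lam D RA RB (⇑UA) r')
    (huA : ∀ ρ, uA ρ = Real.sqrt (lam * εA * RA) *
      UA (Real.sqrt (lam * εA * RA) • ρ))
    (huB : ∀ ρ', uB ρ' = Real.sqrt (lam * εB * RB) *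
      UB (Real.sqrt (lam * εB * RB) • ρ'))
    (ρ' : Plane) :
    uB ρ' = s * Real.exp (-(s * β)) * fracH (s * β) uA (s • ρ') := by
  obtain rfl : uA = reducedAmplitude (lam * εA * RA) UA := funext huA
  obtain rfl : UB = diffract lam D RA RB UA := funext hUB
  subst hεA hεB
  exact (huB ρ').trans (stmt16_general hlam hs hsgn hcoth hβD UA ρ')

end
end

section
/- Let n, n', d, d', R_D be nonzero real numbers, let β and β' be nonzero real numbers, and let s, s' ∈ {1, −1}. Assume the reduced-variable matching condition s'·n'·(R_D − d')/(d'·coth β') = −s·n·(R_D − d)/(d·coth β) and the imaging condition s·β + s'·β' = 0. Then the conjugation formula of the refracting spherical cap holds: n'/d' = n/d + (n' − n)/R_D. -/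
/- The reduced variables on the cap carry the factor `n (R - d) / (d coth β)`, which is
`-R tanh β` times the Abbe invariant `n (1/R - 1/d)`. As `tanh` is odd, a sign `s` moves inside
it, so the imaging condition makes the factors `tanh (s β)` and `tanh (s' β')` opposite. They are
nonzero and cancel from the matching condition, which leaves the conservation of the Abbe
invariant; that is the conjugation formula. -/

section AbbeInvariant

variable {K : Type*} [Field K]

/-- The Abbe invariant `n (1/R - 1/d)` of a point at algebraic distance `d` from the vertex of a
spherical cap of radius `R`, in the medium of index `n`: the paraxial quantity that refraction
preserves. -/
def abbeInvariant (n R d : K) : K :=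
  n * (R⁻¹ - d⁻¹)

theorem abbeInvariant_eq_iff (n n' R d d' : K) :
    abbeInvariant n' R d' = abbeInvariant n R d ↔ n' / d' = n / d + (n' - n) / R := by
  unfold abbeInvariant
  constructor <;> intro h <;> linear_combination -h

theorem mul_sub_div_eq_neg_mul_abbeInvariant (n : K) {R d : K} (hR : R ≠ 0) (hd : d ≠ 0) :
    n * (R - d) / d = -(R * abbeInvariant n R d) := by
  unfold abbeInvariant
  field_simp
  ring

end AbbeInvariant

theorem map_sign_mul_of_odd {A : Type*} [NonAssocRing A] {f : A → A} (hf : Function.Odd f)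
    {s : A} (hs : s = 1 ∨ s = -1) (x : A) : f (s * x) = s * f x := by
  rcases hs with rfl | rfl
  · rw [one_mul, one_mul]
  · rw [neg_one_mul, neg_one_mul, hf]

theorem sign_mul_mul_sub_div_mul_coth_eq {s : ℝ} (hs : s = 1 ∨ s = -1) (n β : ℝ)
    {R d : ℝ} (hR : R ≠ 0) (hd : d ≠ 0) :
    s * n * (R - d) / (d * (Real.cosh β / Real.sinh β)) =
      -(R * Real.tanh (s * β) * abbeInvariant n R d) :=
  calc
    s * n * (R - d) / (d * (Real.cosh β / Real.sinh β))
    _ = s * Real.tanh β * (n * (R - d) / d) := by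
      rw [← div_div, div_div_eq_mul_div, Real.tanh_eq_sinh_div_cosh]
      ring
    _ = -(R * Real.tanh (s * β) * abbeInvariant n R d) := by
      rw [mul_sub_div_eq_neg_mul_abbeInvariant n hR hd, map_sign_mul_of_odd Real.tanh_neg hs]
      ring

/-- Conjugation formula for the refracting spherical cap: under the reduced-variable
matching condition `s'·n'·(R_D − d')/(d'·coth β') = −s·n·(R_D − d)/(d·coth β)` and the
imaging condition `s·β + s'·β' = 0`, one has `n'/d' = n/d + (n' − n)/R_D`.
Here `coth β = cosh β / sinh β`. -/
theorem stmt19 (n n' d d' RD β β' s s' : ℝ)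
    (hn : n ≠ 0) (hn' : n' ≠ 0) (hd : d ≠ 0) (hd' : d' ≠ 0) (hRD : RD ≠ 0)
    (hβ : β ≠ 0) (hβ' : β' ≠ 0)
    (hs : s = 1 ∨ s = -1) (hs' : s' = 1 ∨ s' = -1)
    (hmatch : s' * n' * (RD - d') / (d' * (Real.cosh β' / Real.sinh β')) =
      -(s * n * (RD - d) / (d * (Real.cosh β / Real.sinh β))))
    (himg : s * β + s' * β' = 0) :
    n' / d' = n / d + (n' - n) / RD := by
  have hs0 : s ≠ 0 := by rcases hs with rfl | rfl <;> norm_num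
  have htanh : Real.tanh (s * β) ≠ 0 :=
    (Real.tanh_injective.ne_iff' Real.tanh_zero).2 (mul_ne_zero hs0 hβ)
  have hopposite : Real.tanh (s' * β') = -Real.tanh (s * β) := by
    rw [eq_neg_of_add_eq_zero_right himg, Real.tanh_neg]
  rw [sign_mul_mul_sub_div_mul_coth_eq hs' n' β' hRD hd',
    sign_mul_mul_sub_div_mul_coth_eq hs n β hRD hd, hopposite] at hmatch
  have habbe : abbeInvariant n' RD d' = abbeInvariant n RD d :=
    mul_left_cancel₀ (mul_ne_zero hRD htanh) (by linear_combination hmatch)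
  exact (abbeInvariant_eq_iff n n' RD d d').1 habbe
end
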